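/- arXiv:1709.07264 — 2 statements merged into one kernel-verified Lean document; each statement's English description precedes it below -/
import Mathlib

section
/- Fix τ > 0. In the general detection model, the undetectable case is present, i.e. ‖P_(n) − Q_(n)‖ → 0, if and only if both I_{n,1,τ} → 0 and I_{n,2,τ} → 0 (as n → ∞). -/
open MeasureTheory Filter Topology

noncomputable section

/-- Mixture `Q = (1-e)·P + e·μ`. -/
def Qmix {α : Type*} [MeasurableSpace α] (P μ : Measure α) (e : ℝ) : Measure α :=
  (ENNReal.ofReal (1 - e)) • P + (ENNReal.ofReal e) • μ

/-- Real-valued Radon–Nikodym density `dμ/dP`. -/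
def dmuP {α : Type*} [MeasurableSpace α] (μ P : Measure α) (a : α) : ℝ :=
  (μ.rnDeriv P a).toReal

/-- `I_{n,1,x} = Σ_{i<k_n} ε_{n,i} μ_{n,i}({ε_{n,i}·dμ_{n,i}/dP_{n,i} > x})`. -/
def I1 {α : Type*} [MeasurableSpace α] (P μ : ℕ → ℕ → Measure α) (ε : ℕ → ℕ → ℝ)
    (k : ℕ → ℕ) (x : ℝ) (n : ℕ) : ℝ :=
  ∑ i ∈ Finset.range (k n),
    ε n i * ((μ n i) {a | x < ε n i * dmuP (μ n i) (P n i) a}).toReal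

/-- `I_{n,2,x} = Σ_{i<k_n} ε_{n,i}² E_{P_{n,i}}[(dμ/dP)² 1{ε·dμ/dP ≤ x} − 1]`. -/
def I2 {α : Type*} [MeasurableSpace α] (P μ : ℕ → ℕ → Measure α) (ε : ℕ → ℕ → ℝ)
    (k : ℕ → ℕ) (x : ℝ) (n : ℕ) : ℝ :=
  ∑ i ∈ Finset.range (k n),
    (ε n i) ^ 2 * ∫ a, ((dmuP (μ n i) (P n i) a) ^ 2 *
      (if ε n i * dmuP (μ n i) (P n i) a ≤ x then (1 : ℝ) else 0) - 1) ∂(P n i)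

/-- Product null measure `P_(n) = ⊗_{i<k_n} P_{n,i}`. -/
def Pprod {α : Type*} [MeasurableSpace α] (P : ℕ → ℕ → Measure α) (k : ℕ → ℕ) (n : ℕ) :
    Measure (Fin (k n) → α) :=
  Measure.pi (fun i => P n i)

/-- Product alternative measure `Q_(n) = ⊗_{i<k_n} Q_{n,i}`. -/
def Qprod {α : Type*} [MeasurableSpace α] (P μ : ℕ → ℕ → Measure α) (ε : ℕ → ℕ → ℝ)
    (k : ℕ → ℕ) (n : ℕ) : Measure (Fin (k n) → α) :=
  Measure.pi (fun i => Qmix (P n i) (μ n i) (ε n i))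

/-- Total variation distance `‖P − Q‖ = sup_A |P(A) − Q(A)|`. -/
def tvDist {β : Type*} [MeasurableSpace β] (P Q : Measure β) : ℝ :=
  ⨆ A : {s : Set β // MeasurableSet s}, |(P A.1).toReal - (Q A.1).toReal|

/-- Density of the mixture. -/
def gden (u e : ℝ) : ℝ := (1 - e) + u

lemma pt_upper {u e τ : ℝ} (hu : 0 ≤ u) (he : 0 ≤ e) (he1 : e ≤ 1) (heτ : e ≤ τ / 2) :
    (√(gden u e) - 1) ^ 2 ≤ (u ^ 2 * (if u ≤ τ then (1 : ℝ) else 0) - e ^ 2)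
      + 3 * (if τ < u then u else 0) - 2 * e * (u - e) := by
  have hg : 0 ≤ gden u e := by unfold gden; linarith
  have hr : √(gden u e) ^ 2 = (1 - e) + u := Real.sq_sqrt hg
  have hr0 := Real.sqrt_nonneg (gden u e)
  set r := √(gden u e)
  have key : u - e = (r - 1) * (r + 1) := by nlinarith
  by_cases h : u ≤ τ
  · rw [if_pos h, if_neg (not_lt.mpr h)]
    have : u ^ 2 * 1 - e ^ 2 + 3 * 0 - 2 * e * (u - e) = ((r - 1) * (r + 1)) ^ 2 := by
      rw [← key]; ring
    rw [this, mul_pow]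
    nlinarith [sq_nonneg (r - 1), mul_nonneg (sq_nonneg (r - 1)) hr0,
      mul_nonneg (sq_nonneg (r - 1)) (sq_nonneg r)]
  · push Not at h
    rw [if_neg (not_le.mpr h), if_pos h]
    have hr1 : 1 ≤ r := by
      by_contra hc
      push Not at hc
      nlinarith
    nlinarith [mul_nonneg hu (sub_nonneg.mpr he1)]

lemma pt_low1 {u e τ : ℝ} (hτ : 0 < τ) (hu : 0 ≤ u) (he : 0 ≤ e) (he1 : e ≤ 1) (heτ : e ≤ τ / 2) :
    τ / (8 * (4 + τ)) * (if τ < u then u else 0) ≤ (√(gden u e) - 1) ^ 2 := by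
  have hg : 0 ≤ gden u e := by unfold gden; linarith
  have hr : √(gden u e) ^ 2 = (1 - e) + u := Real.sq_sqrt hg
  have hr0 := Real.sqrt_nonneg (gden u e)
  set r := √(gden u e)
  have key : u - e = (r - 1) * (r + 1) := by nlinarith
  by_cases h : τ < u
  · rw [if_pos h]
    have hx : u / 2 ≤ u - e := by linarith
    set x := u - e with hxdef
    -- (r+1)^2 ≤ 2 (r^2+1) = 2 (2 + x)
    have h1 : (r + 1) ^ 2 ≤ 2 * (2 + x) := by nlinarith [sq_nonneg (r - 1)]
    have h2 : x ^ 2 ≤ (r - 1) ^ 2 * (2 * (2 + x)) := by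
      rw [key, mul_pow]
      rw [← key]
      exact mul_le_mul_of_nonneg_left h1 (sq_nonneg _)
    have hxpos : 0 < 2 * (2 + x) := by linarith
    have h3 : x ^ 2 / (2 * (2 + x)) ≤ (r - 1) ^ 2 := by
      rw [div_le_iff₀ hxpos]; exact h2
    refine le_trans ?_ h3
    rw [le_div_iff₀ hxpos, div_mul_eq_mul_div, div_mul_eq_mul_div, div_le_iff₀ (by linarith)]
    have a1 : τ ≤ 2 * x := by linarith
    have a2 : u ≤ 2 * x := by linarith
    have hx0 : 0 < x := by linarith
    have b1 : τ * (2 + x) ≤ x * (4 + τ) := by nlinarith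
    have b2 : u * (τ * (2 + x)) ≤ (2 * x) * (x * (4 + τ)) := by
      apply mul_le_mul a2 b1 (by positivity) (by positivity)
    nlinarith [mul_pos hx0 (mul_pos hx0 (by linarith : 0 < 4 + τ))]
  · rw [if_neg h, mul_zero]; positivity

lemma pt_low2 {u e τ : ℝ} (hu : 0 ≤ u) (he : 0 ≤ e) (he1 : e ≤ 1) :
    0 ≤ (u ^ 2 * (if u ≤ τ then (1 : ℝ) else 0) - e ^ 2)
      + 2 * (if τ < u then u else 0) - 2 * e * (u - e) := by
  by_cases h : u ≤ τ
  · rw [if_pos h, if_neg (not_lt.mpr h)]; nlinarith [sq_nonneg (u - e)]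
  · rw [if_neg h, if_pos (not_le.mp h)]
    nlinarith [mul_nonneg hu (sub_nonneg.mpr he1), sq_nonneg e]

lemma pt_low3 {u e τ : ℝ} (hu : 0 ≤ u) (he : 0 ≤ e) (he1 : e ≤ 1) (heτ : e ≤ τ / 2) :
    (u ^ 2 * (if u ≤ τ then (1 : ℝ) else 0) - e ^ 2) - 2 * e * (u - e)
      ≤ 2 * (2 + τ) * (√(gden u e) - 1) ^ 2 := by
  have hg : 0 ≤ gden u e := by unfold gden; linarith
  have hr : √(gden u e) ^ 2 = (1 - e) + u := Real.sq_sqrt hg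
  have hr0 := Real.sqrt_nonneg (gden u e)
  set r := √(gden u e)
  have key : u - e = (r - 1) * (r + 1) := by nlinarith
  by_cases h : u ≤ τ
  · rw [if_pos h]
    have : u ^ 2 * 1 - e ^ 2 - 2 * e * (u - e) = ((r - 1) * (r + 1)) ^ 2 := by
      rw [← key]; ring
    rw [this, mul_pow, mul_comm]
    apply mul_le_mul_of_nonneg_right _ (sq_nonneg _)
    nlinarith [sq_nonneg (r - 1)]
  · rw [if_neg h]
    push Not at h
    have : 0 ≤ 2 * (2 + τ) * (r - 1) ^ 2 := by
      have : 0 ≤ 2 * (2 + τ) := by linarith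
      positivity
    nlinarith [mul_nonneg he (by linarith : 0 ≤ u - e)]

section coord
variable {α : Type*} [MeasurableSpace α]

lemma dmuP_meas (μ P : Measure α) : Measurable (dmuP μ P) :=
  (Measure.measurable_rnDeriv μ P).ennreal_toReal

lemma dmuP_nonneg (μ P : Measure α) (a : α) : 0 ≤ dmuP μ P a := ENNReal.toReal_nonneg

lemma dmuP_int (μ P : Measure α) [IsProbabilityMeasure μ] : Integrable (dmuP μ P) P :=
  Measure.integrable_toReal_rnDeriv

lemma dmuP_integral (μ P : Measure α) [IsProbabilityMeasure μ] [IsProbabilityMeasure P]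
    (h : μ ≪ P) : ∫ a, dmuP μ P a ∂P = 1 := by
  have := Measure.integral_toReal_rnDeriv h
  simpa [dmuP] using this

/-- density of Q wrt P -/
def G (μ P : Measure α) (e : ℝ) (a : α) : ℝ := gden (e * dmuP μ P a) e

lemma G_meas (μ P : Measure α) (e : ℝ) : Measurable (G μ P e) := by
  unfold G gden
  exact ((dmuP_meas μ P).const_mul e).const_add _

lemma G_nonneg (μ P : Measure α) {e : ℝ} (he : e ∈ Set.Icc (0:ℝ) 1) (a : α) : 0 ≤ G μ P e a := by
  unfold G gden
  have := mul_nonneg he.1 (dmuP_nonneg μ P a)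
  linarith [he.2]

lemma G_int (μ P : Measure α) [IsProbabilityMeasure μ] [IsProbabilityMeasure P] (e : ℝ) :
    Integrable (G μ P e) P := by
  unfold G gden
  exact (integrable_const _).add ((dmuP_int μ P).const_mul e)

lemma G_integral (μ P : Measure α) [IsProbabilityMeasure μ] [IsProbabilityMeasure P]
    (h : μ ≪ P) (e : ℝ) : ∫ a, G μ P e a ∂P = 1 := by
  unfold G gden
  rw [integral_add (integrable_const _) ((dmuP_int μ P).const_mul e), integral_const_mul,
    dmuP_integral μ P h]
  simp

lemma Qmix_eq (μ P : Measure α) [IsProbabilityMeasure μ] [IsProbabilityMeasure P]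
    (h : μ ≪ P) {e : ℝ} (he : e ∈ Set.Icc (0:ℝ) 1) :
    Qmix P μ e = P.withDensity (fun a => ENNReal.ofReal (G μ P e a)) := by
  have h1 : μ = P.withDensity (fun a => ENNReal.ofReal (dmuP μ P a)) := by
    conv_lhs => rw [← Measure.withDensity_rnDeriv_eq μ P h]
    apply withDensity_congr_ae
    filter_upwards [Measure.rnDeriv_lt_top μ P] with a ha
    rw [dmuP, ENNReal.ofReal_toReal ha.ne]
  have hm := dmuP_meas μ P
  have h2 : (fun a => ENNReal.ofReal (G μ P e a)) =
      (fun _ => ENNReal.ofReal (1 - e)) +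
        (ENNReal.ofReal e) • (fun a => ENNReal.ofReal (dmuP μ P a)) := by
    funext a
    simp only [G, gden, Pi.add_apply, Pi.smul_apply, smul_eq_mul]
    rw [ENNReal.ofReal_add (by linarith [he.2]) (mul_nonneg he.1 (dmuP_nonneg μ P a)),
      ENNReal.ofReal_mul he.1]
  rw [h2, withDensity_add_left measurable_const, withDensity_const,
    withDensity_smul _ hm.ennreal_ofReal, ← h1]
  rfl

lemma sqrt_int {P : Measure α} [IsProbabilityMeasure P] {L : α → ℝ} (hm : Measurable L)
    (h0 : ∀ a, 0 ≤ L a) (hi : Integrable L P) : Integrable (fun a => √(L a)) P := by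
  refine Integrable.mono' ((integrable_const (1:ℝ)).add hi) hm.sqrt.aestronglyMeasurable ?_
  refine ae_of_all _ fun a => ?_
  rw [Real.norm_of_nonneg (Real.sqrt_nonneg _)]
  simp only [Pi.add_apply]
  nlinarith [Real.sq_sqrt (h0 a), sq_nonneg (√(L a) - 1), Real.sqrt_nonneg (L a)]

lemma sq_sqrt_int {P : Measure α} [IsProbabilityMeasure P] {L : α → ℝ} (hm : Measurable L)
    (h0 : ∀ a, 0 ≤ L a) (hi : Integrable L P) (c : ℝ) :
    Integrable (fun a => (√(L a) + c) ^ 2) P ∧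
     ∫ a, (√(L a) + c) ^ 2 ∂P = ∫ a, L a ∂P + 2 * c * ∫ a, √(L a) ∂P + c ^ 2 := by
  have hs := sqrt_int hm h0 hi
  have heq : (fun a => (√(L a) + c) ^ 2) = fun a => (L a + 2 * c * √(L a)) + c ^ 2 := by
    funext a
    have := Real.sq_sqrt (h0 a)
    ring_nf
    rw [this]; ring
  rw [heq]
  have hA : Integrable (fun a => L a + 2 * c * √(L a)) P := hi.add (hs.const_mul _)
  refine ⟨hA.add (integrable_const _), ?_⟩
  rw [integral_add hA (integrable_const _),
    integral_add hi (hs.const_mul _), integral_const_mul]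
  simp

/-- squared Hellinger -/
def hel (P μ : Measure α) (e : ℝ) : ℝ := ∫ a, (√(G μ P e a) - 1) ^ 2 ∂P

lemma hel_eq (μ P : Measure α) [IsProbabilityMeasure μ] [IsProbabilityMeasure P]
    (h : μ ≪ P) {e : ℝ} (he : e ∈ Set.Icc (0:ℝ) 1) :
    Integrable (fun a => (√(G μ P e a) - 1) ^ 2) P ∧
    ∫ a, √(G μ P e a) ∂P = 1 - hel P μ e / 2 := by
  have := sq_sqrt_int (G_meas μ P e) (G_nonneg μ P he) (G_int μ P e) (-1)
  simp only [← sub_eq_add_neg] at this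
  refine ⟨this.1, ?_⟩
  unfold hel
  rw [this.2, G_integral μ P h]
  ring

lemma coord_bounds (μ P : Measure α) [IsProbabilityMeasure μ] [IsProbabilityMeasure P]
    (h : μ ≪ P) {e τ : ℝ} (he : e ∈ Set.Icc (0:ℝ) 1) (hτ : 0 < τ) (heτ : e ≤ τ / 2)
    {m j : ℝ}
    (hm : m = e * (μ {a | τ < e * dmuP μ P a}).toReal)
    (hj : j = e ^ 2 * ∫ a, ((dmuP μ P a) ^ 2 *
      (if e * dmuP μ P a ≤ τ then (1 : ℝ) else 0) - 1) ∂P) :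
    hel P μ e ≤ j + 3 * m ∧ τ / (8 * (4 + τ)) * m ≤ hel P μ e ∧ 0 ≤ j + 2 * m ∧
      j ≤ 2 * (2 + τ) * hel P μ e ∧ 0 ≤ m := by
  obtain ⟨hsi, -⟩ := hel_eq μ P h he
  have hfm := dmuP_meas μ P
  have hum : Measurable (fun a => e * dmuP μ P a) := hfm.const_mul e
  have hu0 : ∀ a, 0 ≤ e * dmuP μ P a := fun a => mul_nonneg he.1 (dmuP_nonneg μ P a)
  have hui : Integrable (fun a => e * dmuP μ P a) P := (dmuP_int μ P).const_mul e
  have hset : MeasurableSet {a | τ < e * dmuP μ P a} := measurableSet_lt measurable_const hum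
  have hset' : MeasurableSet {a | e * dmuP μ P a ≤ τ} := measurableSet_le hum measurable_const
  -- the three integrals
  have hMi : Integrable (fun a => if τ < e * dmuP μ P a then e * dmuP μ P a else 0) P :=
    hui.indicator hset
  have hM : ∫ a, (if τ < e * dmuP μ P a then e * dmuP μ P a else 0) ∂P = m := by
    have h1 : (fun a => if τ < e * dmuP μ P a then e * dmuP μ P a else 0) =
      {a | τ < e * dmuP μ P a}.indicator (fun a => e * dmuP μ P a) := by
      funext a; rfl
    rw [h1, integral_indicator hset, integral_const_mul, hm]
    congr 1
    exact Measure.setIntegral_toReal_rnDeriv h _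
  have hJm : Measurable (fun a => (e * dmuP μ P a) ^ 2 *
      (if e * dmuP μ P a ≤ τ then (1 : ℝ) else 0) - e ^ 2) := by
    refine Measurable.sub_const ((hum.pow_const 2).mul ?_) _
    exact Measurable.ite hset' measurable_const measurable_const
  have hJi : Integrable (fun a => (e * dmuP μ P a) ^ 2 *
      (if e * dmuP μ P a ≤ τ then (1 : ℝ) else 0) - e ^ 2) P := by
    refine Integrable.mono' (integrable_const (τ ^ 2 + e ^ 2)) hJm.aestronglyMeasurable ?_
    refine ae_of_all _ fun a => ?_
    rw [Real.norm_eq_abs, abs_le]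
    have := hu0 a
    split_ifs with hc
    · constructor <;> nlinarith [sq_nonneg e, sq_nonneg τ]
    · constructor <;> nlinarith [sq_nonneg e, sq_nonneg τ]
  have hJ : ∫ a, ((e * dmuP μ P a) ^ 2 *
      (if e * dmuP μ P a ≤ τ then (1 : ℝ) else 0) - e ^ 2) ∂P = j := by
    rw [hj, ← integral_const_mul]
    congr 1; funext a; ring
  have hKi : Integrable (fun a => 2 * e * (e * dmuP μ P a - e)) P :=
    (hui.sub (integrable_const e)).const_mul _
  have hK : ∫ a, 2 * e * (e * dmuP μ P a - e) ∂P = 0 := by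
    rw [integral_const_mul, integral_sub hui (integrable_const e), integral_const_mul,
      dmuP_integral μ P h]
    simp
  refine ⟨?_, ?_, ?_, ?_, ?_⟩
  · have := integral_mono hsi ((hJi.add (hMi.const_mul 3)).sub hKi)
      (fun a => pt_upper (hu0 a) he.1 he.2 heτ)
    rw [integral_sub' (hJi.add (hMi.const_mul 3)) hKi, integral_add' hJi (hMi.const_mul 3),
      integral_const_mul, hM, hJ, hK] at this
    simpa [hel] using this
  · have := integral_mono (hMi.const_mul (τ / (8 * (4 + τ)))) hsi
      (fun a => pt_low1 hτ (hu0 a) he.1 he.2 heτ)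
    rw [integral_const_mul, hM] at this
    exact this
  · have := integral_mono (integrable_zero α ℝ P) ((hJi.add (hMi.const_mul 2)).sub hKi)
      (fun a => pt_low2 (τ := τ) (hu0 a) he.1 he.2)
    rw [integral_zero'] at this
    have e1 := integral_sub' (hJi.add (hMi.const_mul 2)) hKi
    rw [integral_add' hJi (hMi.const_mul 2), integral_const_mul, hM, hJ, hK, sub_zero] at e1
    rw [← e1]; exact this
  · have := integral_mono (hJi.sub hKi) (hsi.const_mul (2 * (2 + τ)))
      (fun a => pt_low3 (hu0 a) he.1 he.2 heτ)
    rw [integral_sub' hJi hKi, hJ, hK, integral_const_mul, sub_zero] at this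
    exact this
  · rw [hm]; exact mul_nonneg he.1 ENNReal.toReal_nonneg

lemma hel_nonneg (P μ : Measure α) (e : ℝ) : 0 ≤ hel P μ e :=
  integral_nonneg fun _ => sq_nonneg _

lemma withDensity_toReal {P : Measure α} [IsProbabilityMeasure P] {L : α → ℝ}
    (h0 : ∀ a, 0 ≤ L a) (hi : Integrable L P) {A : Set α} (hA : MeasurableSet A) :
    ((P.withDensity (fun a => ENNReal.ofReal (L a))) A).toReal = ∫ a in A, L a ∂P := by
  rw [withDensity_apply _ hA, ← ofReal_integral_eq_lintegral_ofReal hi.integrableOn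
    (ae_of_all _ h0), ENNReal.toReal_ofReal (integral_nonneg h0)]

lemma tv_bdd (P Q : Measure α) [IsProbabilityMeasure P] [IsProbabilityMeasure Q] :
    BddAbove (Set.range fun A : {s : Set α // MeasurableSet s} =>
      |(P A.1).toReal - (Q A.1).toReal|) := by
  refine ⟨1, ?_⟩
  rintro _ ⟨A, rfl⟩
  have h1 : (P A.1).toReal ≤ 1 := measureReal_le_one
  have h2 : (Q A.1).toReal ≤ 1 := measureReal_le_one
  have h3 : 0 ≤ (P A.1).toReal := ENNReal.toReal_nonneg
  have h4 : 0 ≤ (Q A.1).toReal := ENNReal.toReal_nonneg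
  exact abs_le.mpr ⟨by linarith, by linarith⟩

lemma tv_upper {P : Measure α} [IsProbabilityMeasure P] {L : α → ℝ} (hm : Measurable L)
    (h0 : ∀ a, 0 ≤ L a) (hi : Integrable L P) (h1 : ∫ a, L a ∂P = 1) {t : ℝ} (ht : 0 < t) :
    tvDist P (P.withDensity (fun a => ENNReal.ofReal (L a))) ≤
      (1 - ∫ a, √(L a) ∂P) / t + 2 * t := by
  unfold tvDist
  haveI : Nonempty {s : Set α // MeasurableSet s} := ⟨⟨∅, MeasurableSet.empty⟩⟩
  refine ciSup_le fun A => ?_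
  obtain ⟨i1, e1⟩ := sq_sqrt_int hm h0 hi (-1)
  obtain ⟨i2, e2⟩ := sq_sqrt_int hm h0 hi 1
  rw [withDensity_toReal h0 hi A.2]
  have hP : (P A.1).toReal = ∫ a in A.1, (1:ℝ) ∂P := by simp [measureReal_def]
  have hin : Integrable (fun a => 1 - L a) P := (integrable_const 1).sub hi
  rw [hP, ← integral_sub (integrable_const _) hi.integrableOn]
  have s1 : |∫ a in A.1, (1 - L a) ∂P| ≤ ∫ a, |1 - L a| ∂P :=
    (abs_integral_le_integral_abs).trans
      (setIntegral_le_integral hin.abs (ae_of_all _ fun a => abs_nonneg _))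
  have s2 : ∫ a, |1 - L a| ∂P ≤
      ∫ a, ((1 / (2 * t)) * (√(L a) + -1) ^ 2 + (t / 2) * (√(L a) + 1) ^ 2) ∂P := by
    refine integral_mono hin.abs ((i1.const_mul _).add (i2.const_mul _)) fun a => ?_
    have hr := Real.sq_sqrt (h0 a)
    simp only
    set r := √(L a)
    have k1 : |1 - L a| = |r + -1| * |r + 1| := by
      rw [← abs_mul, ← hr, ← abs_neg]; congr 1; ring
    rw [k1, ← sq_abs (r + -1), ← sq_abs (r + 1)]
    set x := |r + -1|
    set y := |r + 1|
    have : 1 / (2 * t) * x ^ 2 + t / 2 * y ^ 2 - x * y = (x - t * y) ^ 2 / (2 * t) := by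
      field_simp; ring
    have h5 : 0 ≤ (x - t * y) ^ 2 / (2 * t) := by positivity
    linarith
  rw [integral_add (i1.const_mul _) (i2.const_mul _), integral_const_mul, integral_const_mul,
    e1, e2, h1] at s2
  refine s1.trans (s2.trans ?_)
  have i3 : 0 ≤ ∫ a, (√(L a) + -1) ^ 2 ∂P := integral_nonneg fun _ => sq_nonneg _
  rw [e1, h1] at i3
  set b := ∫ a, √(L a) ∂P
  have : 1 / (2 * t) * (1 + 2 * -1 * b + (-1) ^ 2) = (1 - b) / t := by field_simp; ring
  rw [this]
  nlinarith

lemma tv_lower {P : Measure α} [IsProbabilityMeasure P] {L : α → ℝ} (hm : Measurable L)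
    (h0 : ∀ a, 0 ≤ L a) (hi : Integrable L P) (h1 : ∫ a, L a ∂P = 1) :
    1 - ∫ a, √(L a) ∂P ≤ tvDist P (P.withDensity (fun a => ENNReal.ofReal (L a))) := by
  have hB : MeasurableSet {a | L a ≤ 1} := measurableSet_le hm measurable_const
  haveI : IsProbabilityMeasure (P.withDensity (fun a => ENNReal.ofReal (L a))) := by
    constructor
    rw [withDensity_apply _ MeasurableSet.univ, Measure.restrict_univ,
      ← ofReal_integral_eq_lintegral_ofReal hi (ae_of_all _ h0), h1, ENNReal.ofReal_one]
  have k := le_ciSup (tv_bdd P (P.withDensity (fun a => ENNReal.ofReal (L a)))) ⟨_, hB⟩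
  refine le_trans ?_ k
  refine le_trans ?_ (le_abs_self _)
  simp only
  rw [withDensity_toReal h0 hi hB]
  have hP : (P {a | L a ≤ 1}).toReal = ∫ a in {a | L a ≤ 1}, (1:ℝ) ∂P := by
    simp [measureReal_def]
  have hin : Integrable (fun a => 1 - L a) P := (integrable_const 1).sub hi
  rw [hP, ← integral_sub (integrable_const _) hi.integrableOn, ← integral_indicator hB]
  have hs := sqrt_int hm h0 hi
  have : 1 - ∫ a, √(L a) ∂P = ∫ a, (1 - √(L a)) ∂P := by
    rw [integral_sub (integrable_const _) hs]; simp
  rw [this]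
  refine integral_mono ((integrable_const _).sub hs) (hin.indicator hB) fun a => ?_
  have hr := Real.sq_sqrt (h0 a)
  have hr0 := Real.sqrt_nonneg (L a)
  simp only [Set.indicator_apply, Set.mem_setOf_eq]
  split_ifs with hc
  · have : √(L a) ≤ 1 := Real.sqrt_le_one.mpr hc
    nlinarith
  · push Not at hc
    nlinarith

lemma pi_withDensity {k : ℕ} (P : Fin k → Measure α) [∀ i, IsProbabilityMeasure (P i)]
    (g : Fin k → α → ℝ) (hm : ∀ i, Measurable (g i)) (h0 : ∀ i a, 0 ≤ g i a)
    (hi : ∀ i, Integrable (g i) (P i)) :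
    Measure.pi (fun i => (P i).withDensity (fun a => ENNReal.ofReal (g i a))) =
      (Measure.pi P).withDensity (fun x => ENNReal.ofReal (∏ i, g i (x i))) := by
  haveI : ∀ i, IsFiniteMeasure ((P i).withDensity (fun a => ENNReal.ofReal (g i a))) :=
    fun i => isFiniteMeasure_withDensity_ofReal (hi i).2
  refine Measure.pi_eq fun s hs => ?_
  have hI : Integrable (fun x : Fin k → α => ∏ i, g i (x i)) (Measure.pi P) :=
    Integrable.fintype_prod hi
  rw [withDensity_apply _ (MeasurableSet.univ_pi hs),
    ← ofReal_integral_eq_lintegral_ofReal hI.integrableOn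
      (ae_of_all _ fun x => Finset.prod_nonneg fun i _ => h0 i _),
    Measure.restrict_pi_pi, integral_fintype_prod_eq_prod,
    ENNReal.ofReal_prod_of_nonneg (fun i _ => integral_nonneg (h0 i))]
  refine Finset.prod_congr rfl fun i _ => ?_
  rw [withDensity_apply _ (hs i), ← ofReal_integral_eq_lintegral_ofReal (hi i).integrableOn
      (ae_of_all _ (h0 i))]

lemma one_sub_sum_le {ι : Type*} (s : Finset ι) (f : ι → ℝ) (h0 : ∀ i, 0 ≤ f i)
    (h1 : ∀ i, f i ≤ 1) : 1 - ∑ i ∈ s, f i ≤ ∏ i ∈ s, (1 - f i) := by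
  classical
  induction s using Finset.induction_on with
  | empty => simp
  | insert a s ha ih =>
    rw [Finset.sum_insert ha, Finset.prod_insert ha]
    have hp : ∏ i ∈ s, (1 - f i) ≤ 1 :=
      Finset.prod_le_one (fun i _ => by linarith [h1 i]) (fun i _ => by linarith [h0 i])
    nlinarith [h0 a, h1 a]

lemma prod_le_exp {ι : Type*} (s : Finset ι) (f : ι → ℝ)
    (h1 : ∀ i, f i ≤ 1) : ∏ i ∈ s, (1 - f i) ≤ Real.exp (- ∑ i ∈ s, f i) := by
  rw [← Finset.sum_neg_distrib, Real.exp_sum]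
  refine Finset.prod_le_prod (fun i _ => by linarith [h1 i]) fun i _ => ?_
  linarith [Real.add_one_le_exp (- f i)]

lemma prod_tv {k : ℕ} (P μ : Fin k → Measure α) [∀ i, IsProbabilityMeasure (P i)]
    [∀ i, IsProbabilityMeasure (μ i)] (hac : ∀ i, μ i ≪ P i) (e : Fin k → ℝ)
    (he : ∀ i, e i ∈ Set.Icc (0:ℝ) 1) :
    (1 - Real.exp (- ((∑ i, hel (P i) (μ i) (e i)) / 2)) ≤
      tvDist (Measure.pi P) (Measure.pi fun i => Qmix (P i) (μ i) (e i))) ∧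
    ∀ t, 0 < t → tvDist (Measure.pi P) (Measure.pi fun i => Qmix (P i) (μ i) (e i)) ≤
      ((∑ i, hel (P i) (μ i) (e i)) / 2) / t + 2 * t := by
  have hQ : (Measure.pi fun i => Qmix (P i) (μ i) (e i)) =
      (Measure.pi P).withDensity
        (fun x => ENNReal.ofReal (∏ i, G (μ i) (P i) (e i) (x i))) := by
    rw [← pi_withDensity P (fun i => G (μ i) (P i) (e i)) (fun i => G_meas _ _ _)
      (fun i => G_nonneg _ _ (he i)) (fun i => G_int _ _ _)]
    congr 1; funext i
    exact Qmix_eq _ _ (hac i) (he i)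
  have hLm : Measurable (fun x : Fin k → α => ∏ i, G (μ i) (P i) (e i) (x i)) :=
    Finset.measurable_prod _ fun i _ => (G_meas _ _ _).comp (measurable_pi_apply i)
  have hL0 : ∀ x : Fin k → α, 0 ≤ ∏ i, G (μ i) (P i) (e i) (x i) :=
    fun x => Finset.prod_nonneg fun i _ => G_nonneg _ _ (he i) _
  have hLi : Integrable (fun x : Fin k → α => ∏ i, G (μ i) (P i) (e i) (x i)) (Measure.pi P) :=
    Integrable.fintype_prod fun i => G_int _ _ _
  have hL1 : ∫ x : Fin k → α, ∏ i, G (μ i) (P i) (e i) (x i) ∂(Measure.pi P) = 1 := by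
    rw [integral_fintype_prod_eq_prod]
    exact Finset.prod_eq_one fun i _ => G_integral _ _ (hac i) _
  have hLs : ∫ x : Fin k → α, √(∏ i, G (μ i) (P i) (e i) (x i)) ∂(Measure.pi P) =
      ∏ i, (1 - hel (P i) (μ i) (e i) / 2) := by
    have : (fun x : Fin k → α => √(∏ i, G (μ i) (P i) (e i) (x i))) =
        fun x => ∏ i, √(G (μ i) (P i) (e i) (x i)) := by
      funext x
      exact Real.sqrt_prod _ fun i _ => G_nonneg _ _ (he i) _
    rw [this, integral_fintype_prod_eq_prod (fun i a => √(G (μ i) (P i) (e i) a))]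
    exact Finset.prod_congr rfl fun i _ => (hel_eq _ _ (hac i) (he i)).2
  have hh0 : ∀ i, 0 ≤ hel (P i) (μ i) (e i) / 2 := fun i => by linarith [hel_nonneg (P i) (μ i) (e i)]
  have hh1 : ∀ i, hel (P i) (μ i) (e i) / 2 ≤ 1 := fun i => by
    have : 0 ≤ ∫ a, √(G (μ i) (P i) (e i) a) ∂(P i) := integral_nonneg fun _ => Real.sqrt_nonneg _
    rw [(hel_eq _ _ (hac i) (he i)).2] at this
    linarith
  rw [hQ, Finset.sum_div]
  constructor
  · refine le_trans ?_ (tv_lower hLm hL0 hLi hL1)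
    rw [hLs]
    linarith [prod_le_exp Finset.univ _ hh1]
  · intro t ht
    refine (tv_upper hLm hL0 hLi hL1 ht).trans ?_
    rw [hLs]
    have := one_sub_sum_le Finset.univ _ hh0 hh1
    gcongr
    linarith

end coord

/-- **Statement 0** (Theorem on trivial limits, undetectable case):
for fixed `τ > 0`, undetectability `‖P_(n) − Q_(n)‖ → 0` holds iff
both `I_{n,1,τ} → 0` and `I_{n,2,τ} → 0`. -/
theorem statement1 {α : Type*} [MeasurableSpace α]
    (k : ℕ → ℕ) (P μ : ℕ → ℕ → Measure α) (ε : ℕ → ℕ → ℝ) (τ : ℝ) (hτ : 0 < τ)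
    (hk : Tendsto k atTop atTop)
    (hP : ∀ n i, IsProbabilityMeasure (P n i))
    (hμ : ∀ n i, IsProbabilityMeasure (μ n i))
    (hac : ∀ n i, μ n i ≪ P n i)
    (hε : ∀ n i, ε n i ∈ Set.Icc (0 : ℝ) 1)
    (hεmax : Tendsto (fun n => ⨆ i : Fin (k n), ε n i) atTop (nhds 0)) :
    Tendsto (fun n => tvDist (Pprod P k n) (Qprod P μ ε k n)) atTop (nhds 0) ↔
      (Tendsto (fun n => I1 P μ ε k τ n) atTop (nhds 0) ∧
        Tendsto (fun n => I2 P μ ε k τ n) atTop (nhds 0)) := by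
  have hiP := hP
  have hiμ := hμ
  set S : ℕ → ℝ := fun n => ∑ i : Fin (k n), hel (P n i) (μ n i) (ε n i) with hSdef
  have hS0 : ∀ n, 0 ≤ S n := fun n => Finset.sum_nonneg fun i _ => hel_nonneg _ _ _
  have htv : ∀ n, (1 - Real.exp (- (S n / 2)) ≤ tvDist (Pprod P k n) (Qprod P μ ε k n)) ∧
      ∀ t, 0 < t → tvDist (Pprod P k n) (Qprod P μ ε k n) ≤ (S n / 2) / t + 2 * t :=
    fun n => prod_tv (fun i : Fin (k n) => P n i) (fun i => μ n i) (fun i => hac n i)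
      (fun i => ε n i) (fun i => hε n i)
  have htv0 : ∀ n, 0 ≤ tvDist (Pprod P k n) (Qprod P μ ε k n) := fun n =>
    Real.iSup_nonneg fun _ => abs_nonneg _
  set T : ℕ → ℝ := fun n => tvDist (Pprod P k n) (Qprod P μ ε k n) with hTdef
  have hTS : Tendsto T atTop (nhds 0) ↔ Tendsto S atTop (nhds 0) := by
    constructor
    · intro h
      have hlog : Tendsto (fun n => -2 * Real.log (1 - T n)) atTop (nhds 0) := by
        have h1 : Tendsto (fun n => 1 - T n) atTop (nhds 1) := by
          simpa using h.const_sub 1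
        have h2 := (h1.log one_ne_zero).const_mul (-2)
        simpa using h2
      refine squeeze_zero' (Eventually.of_forall hS0) ?_ hlog
      filter_upwards [h.eventually (gt_mem_nhds (zero_lt_one))] with n hn
      have h3 : 1 - T n ≤ Real.exp (-(S n / 2)) := by linarith [(htv n).1]
      have h4 := Real.log_le_log (by linarith) h3
      rw [Real.log_exp] at h4
      linarith
    · intro h
      rw [Metric.tendsto_atTop] at h ⊢
      intro δ hδ
      obtain ⟨N, hN⟩ := h (δ ^ 2 / 8) (by positivity)
      refine ⟨N, fun n hn => ?_⟩
      have h1 := hN n hn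
      rw [Real.dist_eq, sub_zero, abs_of_nonneg (hS0 n)] at h1
      rw [Real.dist_eq, sub_zero, abs_of_nonneg (htv0 n)]
      have h2 := (htv n).2 (δ / 4) (by positivity)
      have h3 : S n / 2 / (δ / 4) < δ / 2 := by
        rw [div_lt_iff₀ (by positivity)]
        nlinarith
      have : T n ≤ S n / 2 / (δ / 4) + 2 * (δ / 4) := h2
      linarith
  have hb : ∀ᶠ n in atTop, S n ≤ I2 P μ ε k τ n + 3 * I1 P μ ε k τ n ∧
      τ / (8 * (4 + τ)) * I1 P μ ε k τ n ≤ S n ∧ 0 ≤ I2 P μ ε k τ n + 2 * I1 P μ ε k τ n ∧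
      I2 P μ ε k τ n ≤ 2 * (2 + τ) * S n ∧ 0 ≤ I1 P μ ε k τ n := by
    filter_upwards [hεmax.eventually (gt_mem_nhds (half_pos hτ))] with n hn
    have hSr : S n = ∑ i ∈ Finset.range (k n), hel (P n i) (μ n i) (ε n i) :=
      Fin.sum_univ_eq_sum_range (fun i => hel (P n i) (μ n i) (ε n i)) (k n)
    have hc : ∀ i ∈ Finset.range (k n), _ := fun i hi =>
      coord_bounds (μ n i) (P n i) (hac n i) (hε n i) hτ
        ((le_ciSup (f := fun i : Fin (k n) => ε n i) (Set.finite_range _).bddAbove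
          ⟨i, Finset.mem_range.mp hi⟩).trans hn.le) rfl rfl
    rw [hSr]
    unfold I1 I2
    simp only [Finset.mul_sum, ← Finset.sum_add_distrib]
    exact ⟨Finset.sum_le_sum fun i hi => by simpa only [Finset.mul_sum] using (hc i hi).1,
      Finset.sum_le_sum fun i hi => (hc i hi).2.1,
      Finset.sum_nonneg fun i hi => (hc i hi).2.2.1,
      Finset.sum_le_sum fun i hi => (hc i hi).2.2.2.1,
      Finset.sum_nonneg fun i hi => (hc i hi).2.2.2.2⟩
  rw [hTS]
  constructor
  · intro h
    have hc : 0 < τ / (8 * (4 + τ)) := by positivity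
    have hI1 : Tendsto (fun n => I1 P μ ε k τ n) atTop (nhds 0) := by
      have h1 : Tendsto (fun n => S n / (τ / (8 * (4 + τ)))) atTop (nhds 0) := by
        simpa using h.div_const (τ / (8 * (4 + τ)))
      refine squeeze_zero' (hb.mono fun n hn => hn.2.2.2.2) (hb.mono fun n hn => ?_) h1
      rw [le_div_iff₀ hc, mul_comm]
      exact hn.2.1
    refine ⟨hI1, ?_⟩
    refine tendsto_of_tendsto_of_tendsto_of_le_of_le' (g := fun n => -2 * I1 P μ ε k τ n)
      (h := fun n => 2 * (2 + τ) * S n) ?_ ?_ (hb.mono fun n hn => ?_)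
      (hb.mono fun n hn => hn.2.2.2.1)
    · simpa using hI1.const_mul (-2)
    · simpa using h.const_mul (2 * (2 + τ))
    · linarith [hn.2.2.1]
  · rintro ⟨h1, h2⟩
    refine squeeze_zero' (Eventually.of_forall hS0) (hb.mono fun n hn => hn.1) ?_
    simpa using h2.add (h1.const_mul 3)

end
end

section
/- Suppose T_n converges in distribution under P_(n) to ξ1 and under Q_(n) to ξ2, where ξ1, ξ2 take values in the extended real line [−∞,∞]. Then either P(ξ1 ∈ ℝ) = 1 or P(ξ1 = −∞) = 1; and in the latter case also P(ξ2 = +∞) = 1. -/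
open MeasureTheory Filter Topology

noncomputable section

/-- Extended likelihood ratio `dQ/dP` with values in `[0,∞]` (equal to `+∞` on the
`P`-singular part of `Q`), computed via densities w.r.t. `P + Q`. -/
def elr {α : Type*} [MeasurableSpace α] (Q P : Measure α) (a : α) : ENNReal :=
  Q.rnDeriv (P + Q) a / P.rnDeriv (P + Q) a

/-- Log-likelihood ratio statistic `T_n = Σ_{i<k_n} log(dQ_{n,i}/dP_{n,i})(y_i)`,
with values in `[−∞,∞]`. -/
def Tstat {α : Type*} [MeasurableSpace α] (P μ : ℕ → ℕ → Measure α) (ε : ℕ → ℕ → ℝ)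
    (k : ℕ → ℕ) (n : ℕ) (y : Fin (k n) → α) : EReal :=
  ∑ i : Fin (k n), ENNReal.log (elr (Qmix (P n i) (μ n i) (ε n i)) (P n i) (y i))

/-- Law of `T_n` under the null `P_(n)`. -/
def lawP {α : Type*} [MeasurableSpace α] (P μ : ℕ → ℕ → Measure α) (ε : ℕ → ℕ → ℝ)
    (k : ℕ → ℕ) (n : ℕ) : Measure EReal :=
  (Pprod P k n).map (Tstat P μ ε k n)

/-- Law of `T_n` under the alternative `Q_(n)`. -/
def lawQ {α : Type*} [MeasurableSpace α] (P μ : ℕ → ℕ → Measure α) (ε : ℕ → ℕ → ℝ)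
    (k : ℕ → ℕ) (n : ℕ) : Measure EReal :=
  (Qprod P μ ε k n).map (Tstat P μ ε k n)

/-- Weak convergence of a sequence of measures (convergence in distribution):
integrals of bounded continuous functions converge. -/
def WeakLim {β : Type*} [MeasurableSpace β] [TopologicalSpace β]
    (μs : ℕ → Measure β) (ν : Measure β) : Prop :=
  ∀ f : BoundedContinuousFunction β ℝ,
    Tendsto (fun n => ∫ x, f x ∂(μs n)) atTop (nhds (∫ x, f x ∂ν))

end
noncomputable section

section helpers
open scoped ENNReal

lemma Qmix_prob {α : Type*} [MeasurableSpace α] (P μ : Measure α) [IsProbabilityMeasure P]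
    [IsProbabilityMeasure μ] (e : ℝ) (he : e ∈ Set.Icc (0 : ℝ) 1) :
    IsProbabilityMeasure (Qmix P μ e) := by
  constructor
  simp only [Qmix, Measure.add_apply, Measure.smul_apply, measure_univ, smul_eq_mul, mul_one]
  rw [← ENNReal.ofReal_add (by linarith [he.2]) he.1]
  simp

lemma Qmix_ac {α : Type*} [MeasurableSpace α] (P μ : Measure α) (hac : μ ≪ P) (e : ℝ) :
    Qmix P μ e ≪ P := by
  unfold Qmix
  exact (Measure.smul_absolutelyContinuous).add_left
    ((Measure.smul_absolutelyContinuous).trans hac)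

lemma elr_meas {α : Type*} [MeasurableSpace α] (Q P : Measure α) : Measurable (elr Q P) := by
  unfold elr
  exact (Measure.measurable_rnDeriv _ _).div (Measure.measurable_rnDeriv _ _)

lemma elr_ae {α : Type*} [MeasurableSpace α] (Q P : Measure α) [IsProbabilityMeasure P]
    [IsProbabilityMeasure Q] : Q.rnDeriv P =ᵐ[P] elr Q P := by
  have h := Measure.rnDeriv_eq_div_rnDeriv_add Q P
  rw [add_comm Q P] at h
  exact h

lemma elr_bounds {α : Type*} [MeasurableSpace α] (P μ : Measure α) [IsProbabilityMeasure P]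
    [IsProbabilityMeasure μ] (e : ℝ) (he : e ∈ Set.Icc (0 : ℝ) 1)
    (he2 : e ≤ 1/2) : ∀ᵐ x ∂P, (1/2 : ℝ≥0∞) ≤ elr (Qmix P μ e) P x ∧ elr (Qmix P μ e) P x ≠ ⊤ := by
  have := Qmix_prob P μ e he
  have h3 := Measure.rnDeriv_smul_left_of_ne_top P P (r := ENNReal.ofReal (1-e)) (by simp)
  have : IsFiniteMeasure (ENNReal.ofReal (1-e) • P) := Measure.smul_finite _ (by simp)
  have : IsFiniteMeasure (ENNReal.ofReal e • μ) := Measure.smul_finite _ (by simp)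
  have h2 := Measure.rnDeriv_add (ENNReal.ofReal (1-e) • P) (ENNReal.ofReal e • μ) P
  filter_upwards [elr_ae (Qmix P μ e) P, (Qmix P μ e).rnDeriv_lt_top P, h2, h3,
    Measure.rnDeriv_self P] with x a1 a2 a3 a4 a5
  rw [← a1]
  refine ⟨?_, a2.ne⟩
  have : (Qmix P μ e).rnDeriv P x = _ := a3
  rw [this, Pi.add_apply, a4, Pi.smul_apply, a5, smul_eq_mul, mul_one]
  refine le_trans ?_ le_self_add
  rw [show (1/2 : ℝ≥0∞) = ENNReal.ofReal (1/2) by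
    rw [ENNReal.ofReal_div_of_pos] <;> simp]
  exact ENNReal.ofReal_le_ofReal (by linarith)

lemma elr_int {α : Type*} [MeasurableSpace α] (P Q : Measure α) [IsProbabilityMeasure P]
    [IsProbabilityMeasure Q] (hQ : Q ≪ P) (f : α → ℝ≥0∞) (hf : Measurable f) :
    ∫⁻ x, elr Q P x * f x ∂P = ∫⁻ x, f x ∂Q := by
  rw [← lintegral_rnDeriv_mul hQ hf.aemeasurable]
  refine lintegral_congr_ae ?_
  filter_upwards [elr_ae Q P] with x hx
  rw [hx]

lemma pt1 (r : ℝ≥0∞) (h1 : 1/2 ≤ r) (h2 : r ≠ ⊤) :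
    (r ^ (1/2 : ℝ))⁻¹ + 5 * r ^ (1/2 : ℝ) ≤ 4 + 2 * r := by
  lift r to NNReal using h2
  have hr : (1/2 : ℝ) ≤ r := by
    have := ENNReal.toReal_mono (by simp) h1
    simpa using this
  obtain ⟨u, hu⟩ : ∃ u : NNReal, u = r ^ (1/2 : ℝ) := ⟨_, rfl⟩
  have hu2 : u * u = r := by
    rw [hu, ← NNReal.rpow_add_of_nonneg] <;> norm_num
  have hru : ((r : ℝ≥0∞) ^ (1/2 : ℝ)) = (u : ℝ≥0∞) := by
    rw [hu, ENNReal.coe_rpow_of_nonneg _ (by norm_num)]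
  have huu : (u : ℝ) * u = r := by exact_mod_cast hu2
  have hu1 : (1/2 : ℝ) ≤ u := by
    by_contra hc
    push Not at hc
    nlinarith [u.2, show (0:ℝ) ≤ u from u.2]
  have hu0 : u ≠ 0 := by
    rintro rfl
    norm_num at hu1
  rw [hru, ← ENNReal.coe_inv hu0]
  have : u⁻¹ + 5 * u ≤ 4 + 2 * r := by
    rw [← NNReal.coe_le_coe]
    push_cast
    rw [← huu]
    have hpos : (0:ℝ) < u := by linarith
    have : (u:ℝ)⁻¹ ≤ 4 + 2 * (u * u) - 5 * u := by
      rw [inv_le_iff_one_le_mul₀ hpos]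
      nlinarith [mul_nonneg (sq_nonneg ((u:ℝ) - 1)) (by linarith : (0:ℝ) ≤ 2 * u - 1)]
    linarith
  exact_mod_cast this

lemma pt2 (r : ℝ≥0∞) : 2 * r ^ (1/2 : ℝ) ≤ 1 + r := by
  by_cases h2 : r = ⊤
  · simp [h2]
  lift r to NNReal using h2
  obtain ⟨u, hu⟩ : ∃ u : NNReal, u = r ^ (1/2 : ℝ) := ⟨_, rfl⟩
  have hu2 : u * u = r := by
    rw [hu, ← NNReal.rpow_add_of_nonneg] <;> norm_num
  have hru : ((r : ℝ≥0∞) ^ (1/2 : ℝ)) = (u : ℝ≥0∞) := by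
    rw [hu, ENNReal.coe_rpow_of_nonneg _ (by norm_num)]
  rw [hru, ← hu2]
  have : 2 * u ≤ 1 + u * u := by
    rw [← NNReal.coe_le_coe]
    push_cast
    nlinarith [sq_nonneg ((u:ℝ) - 1)]
  exact_mod_cast this

lemma pt3 (r : ℝ≥0∞) (h1 : r ≠ 0) (h2 : r ≠ ⊤) : r * (r ^ (1/2 : ℝ))⁻¹ = r ^ (1/2 : ℝ) := by
  rw [← ENNReal.rpow_neg]
  nth_rw 1 [← ENNReal.rpow_one r]
  rw [← ENNReal.rpow_add _ _ h1 h2]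
  norm_num

lemma ab_bound (a b : ℝ≥0∞) (ha : a ≤ 1) (h : b + 5 * a ≤ 6) : b * a ^ 5 ≤ 1 := by
  have ha' : a ≠ ⊤ := (ha.trans_lt (by simp)).ne
  have hb' : b ≠ ⊤ := ((le_self_add.trans h).trans_lt (by simp)).ne
  lift a to NNReal using ha'
  lift b to NNReal using hb'
  have h' : b + 5 * a ≤ 6 := by exact_mod_cast h
  have ha'' : a ≤ 1 := by exact_mod_cast ha
  have : b * a ^ 5 ≤ 1 := by
    rw [← NNReal.coe_le_coe] at *
    push_cast at *
    have a0 : (0:ℝ) ≤ a := a.2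
    have : (b:ℝ) * a ^ 5 ≤ (6 - 5 * a) * a ^ 5 :=
      mul_le_mul_of_nonneg_right (by linarith) (by positivity)
    have : 0 ≤ ((a:ℝ)-1)^2*(5*a^4+4*a^3+3*a^2+2*a+1) := by positivity
    nlinarith
  exact_mod_cast this

lemma single_bound {α : Type*} [MeasurableSpace α] (P μ : Measure α) [IsProbabilityMeasure P]
    [IsProbabilityMeasure μ] (hac : μ ≪ P) (e : ℝ) (he : e ∈ Set.Icc (0 : ℝ) 1)
    (he2 : e ≤ 1/2) :
    (∫⁻ x, (elr (Qmix P μ e) P x ^ (1/2 : ℝ))⁻¹ ∂(Qmix P μ e)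
      = ∫⁻ x, elr (Qmix P μ e) P x ^ (1/2 : ℝ) ∂P) ∧
    (∫⁻ x, elr (Qmix P μ e) P x ^ (1/2 : ℝ) ∂P ≤ 1) ∧
    (∫⁻ x, (elr (Qmix P μ e) P x ^ (1/2 : ℝ))⁻¹ ∂P) *
      (∫⁻ x, elr (Qmix P μ e) P x ^ (1/2 : ℝ) ∂P) ^ 5 ≤ 1 := by
  have := Qmix_prob P μ e he
  have hQ := Qmix_ac P μ hac e
  have hb := elr_bounds P μ e he he2
  have hm := elr_meas (Qmix P μ e) P
  have hm2 : Measurable fun x => elr (Qmix P μ e) P x ^ (1/2 : ℝ) := hm.pow_const _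
  have hm3 : Measurable fun x => (elr (Qmix P μ e) P x ^ (1/2 : ℝ))⁻¹ := hm2.inv
  have h1 : ∫⁻ x, elr (Qmix P μ e) P x ∂P = 1 := by
    have := elr_int P (Qmix P μ e) hQ (fun _ => 1) measurable_const
    simpa using this
  have ha : ∫⁻ x, elr (Qmix P μ e) P x ^ (1/2 : ℝ) ∂P ≤ 1 := by
    have h := lintegral_mono (μ := P) (fun x => pt2 (elr (Qmix P μ e) P x))
    rw [lintegral_const_mul _ hm2, lintegral_add_left measurable_const, h1] at h
    simp only [lintegral_const, measure_univ, mul_one] at h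
    rw [one_add_one_eq_two] at h
    by_contra hc
    push Not at hc
    have := ENNReal.mul_lt_mul_right (a := 2) (by simp) (by simp) hc
    rw [mul_one] at this
    exact absurd h (not_le.mpr this)
  refine ⟨?_, ha, ab_bound _ _ ha ?_⟩
  · rw [← elr_int P (Qmix P μ e) hQ _ hm3]
    refine lintegral_congr_ae ?_
    filter_upwards [hb] with x hx
    exact pt3 _ (fun h => by rw [h] at hx; simp at hx) hx.2
  · have h := lintegral_mono_ae (μ := P) (hb.mono fun x hx => pt1 _ hx.1 hx.2)
    rw [lintegral_add_left hm3, lintegral_const_mul _ hm2, lintegral_add_left measurable_const,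
      lintegral_const_mul _ hm, h1] at h
    refine h.trans ?_
    simp only [lintegral_const, measure_univ, mul_one]
    norm_num

lemma lint_pi {α : Type*} [MeasurableSpace α] (m : ℕ) (R : Fin m → Measure α)
    [∀ i, IsProbabilityMeasure (R i)] (f : Fin m → α → ℝ≥0∞) (hf : ∀ i, Measurable (f i)) :
    ∫⁻ y, ∏ i, f i (y i) ∂(Measure.pi R) = ∏ i, ∫⁻ x, f i x ∂(R i) := by
  have h := ProbabilityTheory.iIndepFun_pi (μ := R) (X := f) (fun i => (hf i).aemeasurable)
  rw [ProbabilityTheory.lintegral_prod_eq_prod_lintegral_of_indepFun Finset.univ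
    (fun i (y : Fin m → α) => f i (y i)) h (fun i => (hf i).comp (measurable_pi_apply i))]
  refine Finset.prod_congr rfl fun i _ => ?_
  exact (measurePreserving_eval R i).lintegral_comp (hf i)

lemma exp_sum_log {m : ℕ} (u : Fin m → ℝ≥0∞) :
    EReal.exp (∑ i, ENNReal.log (u i)) = ∏ i, u i := by
  have : ∀ s : Finset (Fin m), EReal.exp (∑ i ∈ s, ENNReal.log (u i)) = ∏ i ∈ s, u i := by
    intro s
    induction s using Finset.cons_induction with
    | empty => simp
    | cons i s hi ih => rw [Finset.sum_cons, Finset.prod_cons, EReal.exp_add, ih, ENNReal.exp_log]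
  exact this _

/-- square root of the exponential -/
def gfun (x : EReal) : ℝ≥0∞ := (EReal.exp x) ^ (1/2 : ℝ)

lemma gfun_cont : Continuous gfun :=
  ENNReal.continuous_rpow_const.comp ENNReal.continuous_exp

lemma lint_g {α : Type*} [MeasurableSpace α] (m : ℕ) (R : Fin m → Measure α)
    [∀ i, IsProbabilityMeasure (R i)] (f : Fin m → α → ℝ≥0∞) (hf : ∀ i, Measurable (f i)) :
    ∫⁻ y, gfun (∑ i, ENNReal.log (f i (y i))) ∂(Measure.pi R)
      = ∏ i, ∫⁻ x, f i x ^ (1/2 : ℝ) ∂(R i) := by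
  rw [← lint_pi m R _ (fun i => (hf i).pow_const _)]
  refine lintegral_congr fun y => ?_
  rw [gfun, exp_sum_log, ENNReal.prod_rpow_of_nonneg (by norm_num)]

lemma lint_g_inv {α : Type*} [MeasurableSpace α] (m : ℕ) (R : Fin m → Measure α)
    [∀ i, IsProbabilityMeasure (R i)] (f : Fin m → α → ℝ≥0∞) (hf : ∀ i, Measurable (f i))
    (hne : ∀ i, ∀ᵐ x ∂(R i), (1/2 : ℝ≥0∞) ≤ f i x ∧ f i x ≠ ⊤) :
    ∫⁻ y, (gfun (∑ i, ENNReal.log (f i (y i))))⁻¹ ∂(Measure.pi R)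
      = ∏ i, ∫⁻ x, (f i x ^ (1/2 : ℝ))⁻¹ ∂(R i) := by
  rw [← lint_pi m R (fun i x => (f i x ^ (1/2 : ℝ))⁻¹) (fun i => ((hf i).pow_const _).inv)]
  refine lintegral_congr_ae ?_
  have : ∀ᵐ y ∂(Measure.pi R), ∀ i, (1/2 : ℝ≥0∞) ≤ f i (y i) ∧ f i (y i) ≠ ⊤ := by
    rw [ae_all_iff]
    intro i
    exact (Measure.quasiMeasurePreserving_eval (μ := R) i).ae (hne i)
  filter_upwards [this] with y hy
  rw [gfun, exp_sum_log, ← ENNReal.prod_rpow_of_nonneg (by norm_num), ENNReal.prod_inv_distrib]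
  intro i _ j _ _
  right
  exact ENNReal.rpow_ne_top_of_nonneg (by norm_num) (hy j).2

lemma Tstat_meas {α : Type*} [MeasurableSpace α] (P μ : ℕ → ℕ → Measure α) (ε : ℕ → ℕ → ℝ)
    (k : ℕ → ℕ) (n : ℕ) : Measurable (Tstat P μ ε k n) := by
  unfold Tstat
  refine Finset.measurable_fun_sum _ fun i _ => ?_
  exact ((elr_meas _ _).comp (measurable_pi_apply i)).ennreal_log

lemma weak_lint (L : ℕ → Measure EReal) (ν : Measure EReal) [∀ n, IsProbabilityMeasure (L n)]
    [IsProbabilityMeasure ν] (h : WeakLim L ν) (F : EReal → ℝ≥0∞) (hF : Continuous F) (M : NNReal)  :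
    Tendsto (fun n => ∫⁻ x, min (F x) M ∂(L n)) atTop (𝓝 (∫⁻ x, min (F x) M ∂ν)) := by
  have hc : Continuous fun x => min (F x) (M : ℝ≥0∞) := hF.min continuous_const
  have hlt : ∀ x, min (F x) (M : ℝ≥0∞) ≠ ⊤ := fun x =>
    ((min_le_right _ _).trans_lt ENNReal.coe_lt_top).ne
  have hc' : Continuous fun x => (min (F x) (M : ℝ≥0∞)).toReal := by
    rw [continuous_iff_continuousAt]
    exact fun x => (ENNReal.tendsto_toReal (hlt x)).comp hc.continuousAt
  have hb : ∀ x, ‖(min (F x) (M : ℝ≥0∞)).toReal‖ ≤ M := by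
    intro x
    rw [Real.norm_of_nonneg ENNReal.toReal_nonneg]
    simpa using ENNReal.toReal_mono (by simp) (min_le_right (F x) (M : ℝ≥0∞))
  have key := h (BoundedContinuousFunction.ofNormedAddCommGroup _ hc' M hb)
  simp only [BoundedContinuousFunction.coe_ofNormedAddCommGroup] at key
  have conv : ∀ (ρ : Measure EReal) , ∫ x, (min (F x) (M : ℝ≥0∞)).toReal ∂ρ
      = (∫⁻ x, min (F x) (M : ℝ≥0∞) ∂ρ).toReal := fun ρ =>
    integral_toReal hc.measurable.aemeasurable (Eventually.of_forall fun x => (hlt x).lt_top)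
  simp only [conv] at key
  have fin : ∀ (ρ : Measure EReal) [IsProbabilityMeasure ρ],
      ∫⁻ x, min (F x) (M : ℝ≥0∞) ∂ρ ≠ ⊤ := by
    intro ρ _
    refine ((lintegral_mono (fun x => min_le_right (F x) (M : ℝ≥0∞))).trans_lt ?_).ne
    simp
  exact (ENNReal.tendsto_toReal_iff (fun n => fin (L n)) (fin ν)).1 key

lemma zero_of_bdd (x : ℝ≥0∞) (h : ∀ M : NNReal, (M : ℝ≥0∞) * x ≤ 1) : x = 0 := by
  by_contra hx
  have hx2 : x ≠ ⊤ := by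
    have := h 1
    simp only [ENNReal.coe_one, one_mul] at this
    exact (this.trans_lt (by simp)).ne
  lift x to NNReal using hx2
  have hx' : x ≠ 0 := by exact_mod_cast hx
  have := h (2 * x⁻¹)
  have : 2 * x⁻¹ * x ≤ 1 := by exact_mod_cast this
  rw [mul_assoc, inv_mul_cancel₀ hx', mul_one] at this
  norm_num at this

lemma point_le (ν : Measure EReal) (F : EReal → ℝ≥0∞) (a : EReal)
    (ha : F a = ⊤) (M : NNReal) : (M : ℝ≥0∞) * ν {a} ≤ ∫⁻ x, min (F x) M ∂ν := by
  calc (M : ℝ≥0∞) * ν {a} = ∫⁻ x in {a}, min (F x) M ∂ν := by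
        rw [lintegral_singleton, ha]; simp
    _ ≤ _ := setLIntegral_le_lintegral _ _

lemma point_full (ν : Measure EReal) [IsProbabilityMeasure ν] (F : EReal → ℝ≥0∞)
    (hF : Continuous F) (a : EReal) (ha : ∀ x, F x = 0 → x = a)
    (h : ∫⁻ x, min (F x) (1 : NNReal) ∂ν = 0) : ν {a} = 1 := by
  rw [lintegral_eq_zero_iff (hF.min continuous_const).measurable] at h
  rw [← mem_ae_iff_prob_eq_one (measurableSet_singleton a)]
  filter_upwards [h] with x hx
  refine ha x ?_
  have hx' : min (F x) ((1 : NNReal) : ℝ≥0∞) = 0 := hx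
  rcases min_choice (F x) ((1 : NNReal) : ℝ≥0∞) with h' | h'
  · rw [← h', hx']
  · rw [hx'] at h'; simp at h'

lemma gfun_zero (x : EReal) (h : gfun x = 0) : x = ⊥ := by
  unfold gfun at h
  rw [ENNReal.rpow_eq_zero_iff_of_pos (by norm_num)] at h
  simpa using h

lemma gfun_top (x : EReal) (h : (gfun x)⁻¹ = 0) : x = ⊤ := by
  unfold gfun at h
  rw [ENNReal.inv_eq_zero, ENNReal.rpow_eq_top_iff_of_pos (by norm_num)] at h
  simpa using h

lemma contradict (L1 L : ℕ → Measure EReal) (ν1 ν : Measure EReal)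
    [∀ n, IsProbabilityMeasure (L1 n)] [∀ n, IsProbabilityMeasure (L n)]
    [IsProbabilityMeasure ν1] [IsProbabilityMeasure ν] (h1 : WeakLim L1 ν1) (h : WeakLim L ν)
    (F : EReal → ℝ≥0∞) (hF : Continuous F) (hp : ν1 {⊥} ≠ 0)
    (hb : ∀ᶠ n in atTop, (∫⁻ x, (gfun x)⁻¹ ∂(L1 n)) * (∫⁻ x, F x ∂(L n)) ^ 5 ≤ 1) :
    ∫⁻ x, min (F x) (1 : NNReal) ∂ν = 0 := by
  have fin : ∀ (ρ : Measure EReal) [IsProbabilityMeasure ρ] (G : EReal → ℝ≥0∞) (M : NNReal),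
      ∫⁻ x, min (G x) (M : ℝ≥0∞) ∂ρ ≠ ⊤ := by
    intro ρ _ G M
    refine ((lintegral_mono (fun x => min_le_right (G x) (M : ℝ≥0∞))).trans_lt ?_).ne
    simp
  have : ν1 {⊥} * (∫⁻ x, min (F x) (1 : NNReal) ∂ν) ^ 5 = 0 := by
    refine zero_of_bdd _ fun M => ?_
    have t1 := weak_lint L1 ν1 h1 (fun x => (gfun x)⁻¹) (continuous_inv.comp gfun_cont) M
    have t2 := ((ENNReal.continuous_pow 5).tendsto _).comp (weak_lint L ν h F hF 1)
    have t3 := ENNReal.Tendsto.mul t1 (Or.inr (ENNReal.pow_ne_top (fin _ _ _))) t2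
      (Or.inr (fin _ _ _))
    have t4 := le_of_tendsto t3 (b := 1) (by
      filter_upwards [hb] with n hn
      refine le_trans ?_ hn
      simp only [Function.comp]
      gcongr <;> exact min_le_left _ _)
    rw [← mul_assoc]
    refine le_trans ?_ t4
    gcongr
    exact point_le ν1 (fun x => (gfun x)⁻¹) ⊥ (by simp [gfun]) M
  rcases mul_eq_zero.1 this with h | h
  · exact absurd h hp
  · exact eq_zero_of_pow_eq_zero h

end helpers

/-- if `T_n → ξ1` in distribution under `P_(n)` and `T_n → ξ2` under
`Q_(n)` (values in `[−∞,∞]`), then either `ξ1` is real-valued a.s. or `ξ1 ≡ −∞` a.s.;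
and in the latter case also `ξ2 ≡ +∞` a.s. -/
theorem statement3 {α : Type*} [MeasurableSpace α]
    (k : ℕ → ℕ) (P μ : ℕ → ℕ → Measure α) (ε : ℕ → ℕ → ℝ)
    (hk : Tendsto k atTop atTop)
    (hP : ∀ n i, IsProbabilityMeasure (P n i))
    (hμ : ∀ n i, IsProbabilityMeasure (μ n i))
    (hac : ∀ n i, μ n i ≪ P n i)
    (hε : ∀ n i, ε n i ∈ Set.Icc (0 : ℝ) 1)
    (hεmax : Tendsto (fun n => ⨆ i : Fin (k n), ε n i) atTop (nhds 0))
    (ν1 ν2 : Measure EReal)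
    (hν1 : IsProbabilityMeasure ν1) (hν2 : IsProbabilityMeasure ν2)
    (hwP : WeakLim (lawP P μ ε k) ν1) (hwQ : WeakLim (lawQ P μ ε k) ν2) :
    ν1 {x : EReal | x ≠ ⊥ ∧ x ≠ ⊤} = 1 ∨ (ν1 {⊥} = 1 ∧ ν2 {⊤} = 1) := by
  have hQp : ∀ n i, IsProbabilityMeasure (Qmix (P n i) (μ n i) (ε n i)) :=
    fun n i => Qmix_prob _ _ _ (hε n i)
  have hT := Tstat_meas P μ ε k
  have hL1 : ∀ n, IsProbabilityMeasure (lawP P μ ε k n) := fun n => by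
    unfold lawP Pprod
    exact Measure.isProbabilityMeasure_map (hT n).aemeasurable
  have hL2 : ∀ n, IsProbabilityMeasure (lawQ P μ ε k n) := fun n => by
    unfold lawQ Qprod
    exact Measure.isProbabilityMeasure_map (hT n).aemeasurable
  have hgi : Continuous fun x => (gfun x)⁻¹ := continuous_inv.comp gfun_cont
  have ev : ∀ᶠ n in atTop, ∀ i : Fin (k n), ε n i ≤ 1 / 2 := by
    filter_upwards [hεmax.eventually (gt_mem_nhds (by norm_num : (0:ℝ) < 1/2))] with n hn i
    exact (le_ciSup (f := fun i : Fin (k n) => ε n i) (Set.finite_range _).bddAbove i).trans hn.le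
  have main : ∀ᶠ n in atTop,
      (∫⁻ x, gfun x ∂(lawP P μ ε k n) ≤ 1) ∧
      (∫⁻ x, (gfun x)⁻¹ ∂(lawP P μ ε k n)) * (∫⁻ x, gfun x ∂(lawP P μ ε k n)) ^ 5 ≤ 1 ∧
      (∫⁻ x, (gfun x)⁻¹ ∂(lawQ P μ ε k n)) = ∫⁻ x, gfun x ∂(lawP P μ ε k n) := by
    filter_upwards [ev] with n hn
    have sb := fun i : Fin (k n) =>
      single_bound (P n i) (μ n i) (hac n i) (ε n i) (hε n i) (hn i)
    have eb := fun i : Fin (k n) => elr_bounds (P n i) (μ n i) (ε n i) (hε n i) (hn i)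
    have e1 : ∫⁻ x, gfun x ∂(lawP P μ ε k n) = _ :=
      (lintegral_map gfun_cont.measurable (hT n)).trans
        (lint_g (k n) (fun i => P n i)
          (fun i => elr (Qmix (P n i) (μ n i) (ε n i)) (P n i)) (fun i => elr_meas _ _))
    have e2 : ∫⁻ x, (gfun x)⁻¹ ∂(lawP P μ ε k n) = _ :=
      (lintegral_map hgi.measurable (hT n)).trans
        (lint_g_inv (k n) (fun i => P n i)
          (fun i => elr (Qmix (P n i) (μ n i) (ε n i)) (P n i)) (fun i => elr_meas _ _) eb)
    have e3 : ∫⁻ x, (gfun x)⁻¹ ∂(lawQ P μ ε k n) = _ :=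
      (lintegral_map hgi.measurable (hT n)).trans
        (lint_g_inv (k n) (fun i => Qmix (P n i) (μ n i) (ε n i))
          (fun i => elr (Qmix (P n i) (μ n i) (ε n i)) (P n i)) (fun i => elr_meas _ _)
          (fun i => (Qmix_ac _ _ (hac n i) _).ae_le (eb i)))
    rw [e1, e2, e3]
    refine ⟨Finset.prod_le_one' fun i _ => (sb i).2.1, ?_, ?_⟩
    · rw [← Finset.prod_pow, ← Finset.prod_mul_distrib]
      exact Finset.prod_le_one' fun i _ => (sb i).2.2
    · exact Finset.prod_congr rfl fun i _ => (sb i).1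
  by_cases hp : ν1 {⊥} = 0
  · left
    have htop : ν1 {⊤} = 0 := by
      refine zero_of_bdd _ fun M => ?_
      refine (point_le ν1 gfun ⊤ (by simp [gfun]) M).trans ?_
      refine le_of_tendsto (weak_lint _ ν1 hwP gfun gfun_cont M) ?_
      filter_upwards [main] with n hn
      exact (lintegral_mono fun x => min_le_left _ _).trans hn.1
    have hs : {x : EReal | x ≠ ⊥ ∧ x ≠ ⊤} = ({⊥} ∪ {⊤})ᶜ := by
      ext x; simp [and_comm]
    rw [hs, prob_compl_eq_one_iff ((measurableSet_singleton _).union (measurableSet_singleton _))]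
    exact measure_union_null hp htop
  · right
    refine ⟨point_full ν1 gfun gfun_cont ⊥ gfun_zero ?_,
      point_full ν2 (fun x => (gfun x)⁻¹) hgi ⊤ gfun_top ?_⟩
    · exact contradict _ _ ν1 ν1 hwP hwP gfun gfun_cont hp (main.mono fun n hn => hn.2.1)
    · refine contradict _ _ ν1 ν2 hwP hwQ _ hgi hp (main.mono fun n hn => ?_)
      rw [hn.2.2]
      exact hn.2.1

end
end
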